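/- Let f, a, h : ℝ×ℝ → ℝ (arguments (x,y)) be jointly continuous, continuously differentiable in x with jointly continuous partial derivatives ∂_x f, ∂_x a, ∂_x h, and suppose there are constants 0 < λ₋ ≤ λ₊, β, C, K > 0 and m ∈ ℕ such that for every x: λ₋ ≤ a(x,y) ≤ λ₊ and f(x,y)·y ≤ −β y² + C for all y; |f(x,y)| ≤ K(1+|y|); and |h(x,y)| + |∂_x h(x,y)| + |∂_x f(x,y)| + |∂_x a(x,y)| ≤ K(1+|y|^m) for all (x,y). For each x define ρ(y;x) = a(x,y)⁻¹ exp(∫₀^y f(x,s)/a(x,s) ds), Z(x) = ∫_ℝ ρ(y;x) dy, π(y;x) = ρ(y;x)/Z(x), h̄(x) = ∫_ℝ h(x,y)π(y;x) dy, F(y;x) = ∫_{−∞}^y (h(x,s) − h̄(x))π(s;x) ds, v_y(y;x) = F(y;x)/(a(x,y)π(y;x)), and v_{yy}(y;x) = (h(x,y) − h̄(x))/a(x,y) − f(x,y)F(y;x)/(a(x,y)²π(y;x)). Then h̄ is continuously differentiable on ℝ and for every x: h̄'(x) = ∫_ℝ [ ∂_x h(x,y) − ∂_x f(x,y)·v_y(y;x)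 − ∂_x a(x,y)·v_{yy}(y;x) ] π(y;x) dy. -/

import Mathlib

/-!
Write `h̄ = ∫ hρ / ∫ ρ` and let `g = ∂ₓ log ρ = ∫₀^y ∂ₓ(f / a) ds - ∂ₓa / a` be the score of the
unnormalized density. Differentiating the quotient gives `h̄' = ∫ (∂ₓh + (h - h̄) g) π dy`. The only
nonlocal term is `∫ (h - h̄) π (∫₀^y ∂ₓ(f / a) ds) dy`; since `F` is a primitive of `(h - h̄) π`,
integration by parts turns it into `-∫ F ∂ₓ(f / a) dy`, and regrouping the terms in `∂ₓf` and `∂ₓa`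
produces `v_y` and `v_yy`. There is no boundary term because `F` decays faster than every power: at
`+∞` this uses that `(h - h̄) π` has mean zero.

Every interchange of limits is dominated through one mechanism: functions of polynomial growth times
`ρ`, which dissipativity makes Gaussian in `y` uniformly in `x`. The factor `∫₀^y ∂ₓ(f / a) ds` is
harmless because the primitive of a function of polynomial growth has polynomial growth.
-/

open MeasureTheory

noncomputable section

/-- The explicit (unnormalized) one-dimensional invariant density
`ρ(y) = a(y)⁻¹ exp(∫₀^y f(s)/a(s) ds)`. -/
def rho1 (a f : ℝ → ℝ) (y : ℝ) : ℝ :=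
  (a y)⁻¹ * Real.exp (∫ s in (0:ℝ)..y, f s / a s)

/-- The normalizing constant `Z = ∫_ℝ ρ(y) dy`. -/
def Z1 (a f : ℝ → ℝ) : ℝ := ∫ y, rho1 a f y

/-- The normalized invariant density `π = ρ / Z`. -/
def piDen (a f : ℝ → ℝ) (y : ℝ) : ℝ := rho1 a f y / Z1 a f

/-- The average `h̄ = ∫_ℝ h(y) π(y) dy`. -/
def hbar (a f h : ℝ → ℝ) : ℝ := ∫ y, h y * piDen a f y

/-- `F(y) = ∫_{−∞}^y (h(s) − h̄) π(s) ds`. -/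
def Fint (a f h : ℝ → ℝ) (y : ℝ) : ℝ :=
  ∫ s in Set.Iic y, (h s - hbar a f h) * piDen a f s

/-- The explicit solution `v(y) = ∫₀^y F(s)/(a(s)π(s)) ds` of the one-dimensional
Poisson equation `a v'' + f v' = h − h̄`. -/
def vsol (a f h : ℝ → ℝ) (y : ℝ) : ℝ :=
  ∫ s in (0:ℝ)..y, Fint a f h s / (a s * piDen a f s)

/-- The averaged coefficient `h̄(x) = ∫ h(x,y) π(y;x) dy`. -/
def hbarX (a f h : ℝ → ℝ → ℝ) (x : ℝ) : ℝ :=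
  hbar (fun y => a x y) (fun y => f x y) (fun y => h x y)

/-- The explicit first `y`-derivative `v_y(y;x) = F(y;x)/(a(x,y)π(y;x))` of the
one-dimensional Poisson solution. -/
def vyX (a f h : ℝ → ℝ → ℝ) (x y : ℝ) : ℝ :=
  Fint (fun z => a x z) (fun z => f x z) (fun z => h x z) y /
    (a x y * piDen (fun z => a x z) (fun z => f x z) y)

/-- The explicit second `y`-derivative
`v_{yy}(y;x) = (h(x,y) − h̄(x))/a(x,y) − f(x,y)F(y;x)/(a(x,y)²π(y;x))`. -/
def vyyX (a f h : ℝ → ℝ → ℝ) (x y : ℝ) : ℝ :=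
  (h x y - hbarX a f h x) / a x y -
    f x y * Fint (fun z => a x z) (fun z => f x z) (fun z => h x z) y /
      ((a x y) ^ 2 * piDen (fun z => a x z) (fun z => f x z) y)

open Set

section Growth

variable {ι : Type*} {u v : ι → ℝ → ℝ}

/-- Growth at most polynomial in the real variable, with constants independent of the index. -/
def UniformPolyGrowth (u : ι → ℝ → ℝ) : Prop :=
  ∃ (M : ℝ) (n : ℕ), 0 ≤ M ∧ ∀ i y, |u i y| ≤ M * (1 + |y|) ^ n

/-- Decay faster than every power of the real variable, with constants independent of the index. -/
def UniformRapidDecay (u : ι → ℝ → ℝ) : Prop :=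
  ∀ k : ℕ, ∃ M : ℝ, ∀ i y, (1 + |y|) ^ k * |u i y| ≤ M

/-- Polynomial growth of a single function. -/
abbrev PolyGrowth (u : ℝ → ℝ) : Prop := UniformPolyGrowth fun _ : Unit => u

/-- Rapid decay of a single function. -/
abbrev RapidDecay (u : ℝ → ℝ) : Prop := UniformRapidDecay fun _ : Unit => u

namespace UniformPolyGrowth

theorem of_le_one_add_pow {K : ℝ} {m : ℕ} (hK : 0 ≤ K)
    (hu : ∀ i y, |u i y| ≤ K * (1 + |y| ^ m)) : UniformPolyGrowth u := by
  refine ⟨2 * K, m, by positivity, fun i y => (hu i y).trans ?_⟩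
  have one_le : (1 : ℝ) ≤ (1 + |y|) ^ m := one_le_pow₀ (by linarith [abs_nonneg y])
  have pow_le : |y| ^ m ≤ (1 + |y|) ^ m := by gcongr; linarith
  nlinarith

theorem const (c : ℝ) : UniformPolyGrowth fun (_ : ι) _ => c :=
  ⟨|c|, 0, abs_nonneg c, fun _ _ => by simp⟩

theorem one_add_abs_pow (k : ℕ) : UniformPolyGrowth fun (_ : ι) y => (1 + |y|) ^ k :=
  ⟨1, k, zero_le_one, fun _ y => by rw [one_mul, abs_of_nonneg (by positivity)]⟩

theorem eval (hu : UniformPolyGrowth u) (i : ι) : PolyGrowth (u i) :=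
  let ⟨M, n, hM, hbound⟩ := hu
  ⟨M, n, hM, fun _ => hbound i⟩

theorem neg (hu : UniformPolyGrowth u) : UniformPolyGrowth fun i y => -u i y := by
  simpa only [UniformPolyGrowth, abs_neg] using hu

theorem add (hu : UniformPolyGrowth u) (hv : UniformPolyGrowth v) :
    UniformPolyGrowth fun i y => u i y + v i y := by
  obtain ⟨M, n, hM, hu⟩ := hu
  obtain ⟨L, k, hL, hv⟩ := hv
  refine ⟨M + L, n + k, by positivity, fun i y => ?_⟩
  have one_le : 1 ≤ 1 + |y| := by linarith [abs_nonneg y]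
  calc |u i y + v i y| ≤ M * (1 + |y|) ^ n + L * (1 + |y|) ^ k :=
        (abs_add_le _ _).trans (add_le_add (hu i y) (hv i y))
    _ ≤ M * (1 + |y|) ^ (n + k) + L * (1 + |y|) ^ (n + k) := by gcongr <;> omega
    _ = (M + L) * (1 + |y|) ^ (n + k) := by ring

theorem sub (hu : UniformPolyGrowth u) (hv : UniformPolyGrowth v) :
    UniformPolyGrowth fun i y => u i y - v i y := by
  simpa only [sub_eq_add_neg] using hu.add hv.neg

theorem mul (hu : UniformPolyGrowth u) (hv : UniformPolyGrowth v) :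
    UniformPolyGrowth fun i y => u i y * v i y := by
  obtain ⟨M, n, hM, hu⟩ := hu
  obtain ⟨L, k, hL, hv⟩ := hv
  refine ⟨M * L, n + k, by positivity, fun i y => ?_⟩
  calc |u i y * v i y| ≤ (M * (1 + |y|) ^ n) * (L * (1 + |y|) ^ k) := by
        rw [abs_mul]; gcongr; exacts [hu i y, hv i y]
    _ = M * L * (1 + |y|) ^ (n + k) := by ring

theorem div (hu : UniformPolyGrowth u) (hv : UniformPolyGrowth fun i y => (v i y)⁻¹) :
    UniformPolyGrowth fun i y => u i y / v i y := by
  simpa only [div_eq_mul_inv] using hu.mul hv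

theorem inv_of_le {c : ℝ} (hc : 0 < c) (hu : ∀ i y, c ≤ u i y) :
    UniformPolyGrowth fun i y => (u i y)⁻¹ :=
  ⟨c⁻¹, 0, by positivity, fun i y => by
    rw [pow_zero, mul_one, abs_of_pos (inv_pos.2 (hc.trans_le (hu i y)))]
    exact inv_anti₀ hc (hu i y)⟩

theorem primitive (hu : UniformPolyGrowth u) :
    UniformPolyGrowth fun i y => ∫ s in (0 : ℝ)..y, u i s := by
  obtain ⟨M, n, hM, hu⟩ := hu
  refine ⟨M, n + 1, hM, fun i y => ?_⟩
  have bound_between : ∀ s ∈ uIoc 0 y, ‖u i s‖ ≤ M * (1 + |y|) ^ n := fun s hs => by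
    have : |s| ≤ |y| := by simpa using abs_sub_left_of_mem_uIcc (uIoc_subset_uIcc hs)
    exact (hu i s).trans (by gcongr)
  calc |∫ s in (0 : ℝ)..y, u i s| ≤ M * (1 + |y|) ^ n * |y - 0| :=
        intervalIntegral.norm_integral_le_of_norm_le_const bound_between
    _ ≤ M * (1 + |y|) ^ n * (1 + |y|) := by rw [sub_zero]; gcongr; linarith
    _ = M * (1 + |y|) ^ (n + 1) := by ring

theorem exists_forall_abs_le (hu : UniformPolyGrowth u) (R : ℝ) :
    ∃ L, ∀ i y, |y| ≤ R → |u i y| ≤ L := by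
  obtain ⟨M, n, hM, hu⟩ := hu
  exact ⟨M * (1 + R) ^ n, fun i y hy => (hu i y).trans (by gcongr)⟩

theorem mul_rapidDecay (hu : UniformPolyGrowth u) (hv : UniformRapidDecay v) :
    UniformRapidDecay fun i y => u i y * v i y := by
  obtain ⟨M, n, hM, hu⟩ := hu
  intro k
  obtain ⟨L, hL⟩ := hv (k + n)
  refine ⟨M * L, fun i y => ?_⟩
  calc (1 + |y|) ^ k * |u i y * v i y|
      ≤ (1 + |y|) ^ k * (M * (1 + |y|) ^ n * |v i y|) := by
        rw [abs_mul]; gcongr; exact hu i y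
    _ = M * ((1 + |y|) ^ (k + n) * |v i y|) := by ring
    _ ≤ M * L := by gcongr; exact hL i y

end UniformPolyGrowth

theorem uniformRapidDecay_of_abs_le_exp {c D : ℝ} (hc : 0 < c)
    (hu : ∀ i y, |u i y| ≤ Real.exp (-c * y ^ 2 + D * |y|)) : UniformRapidDecay u := by
  intro k
  refine ⟨k.factorial * Real.exp (1 + (D + 1) ^ 2 / (4 * c)), fun i y => ?_⟩
  have weight_le : (1 + |y|) ^ k ≤ k.factorial * Real.exp (1 + |y|) := by
    have := Real.pow_div_factorial_le_exp (1 + |y|) (by positivity) k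
    rwa [div_le_iff₀' (by positivity)] at this
  have complete_square : (D + 1) ^ 2 / (4 * c) - ((D + 1) * |y| - c * y ^ 2)
      = (2 * c * |y| - (D + 1)) ^ 2 / (4 * c) := by
    rw [← sq_abs y]; field_simp; ring
  have : 0 ≤ (2 * c * |y| - (D + 1)) ^ 2 / (4 * c) := by positivity
  calc (1 + |y|) ^ k * |u i y|
      ≤ k.factorial * Real.exp (1 + |y|) * Real.exp (-c * y ^ 2 + D * |y|) := by
        gcongr; exact hu i y
    _ = k.factorial * Real.exp (1 + |y| + (-c * y ^ 2 + D * |y|)) := by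
        rw [mul_assoc, ← Real.exp_add]
    _ ≤ k.factorial * Real.exp (1 + (D + 1) ^ 2 / (4 * c)) := by
        gcongr k.factorial * Real.exp ?_; linarith

namespace UniformRapidDecay

theorem eval (hu : UniformRapidDecay u) (i : ι) : RapidDecay (u i) := fun k =>
  let ⟨M, hM⟩ := hu k
  ⟨M, fun _ => hM i⟩

theorem abs (hu : UniformRapidDecay u) : UniformRapidDecay fun i y => |u i y| := by
  simpa only [UniformRapidDecay, abs_abs] using hu

theorem div_const (hu : UniformRapidDecay u) (c : ℝ) :
    UniformRapidDecay fun i y => u i y / c := by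
  simpa only [div_eq_inv_mul] using (UniformPolyGrowth.const c⁻¹).mul_rapidDecay hu

theorem exists_norm_le_inv_one_add_sq (hu : UniformRapidDecay u) :
    ∃ M, ∀ i y, ‖u i y‖ ≤ M * (1 + y ^ 2)⁻¹ := by
  obtain ⟨M, hM⟩ := hu 2
  refine ⟨M, fun i y => ?_⟩
  rw [← div_eq_mul_inv, le_div_iff₀' (by positivity)]
  have : 1 + y ^ 2 ≤ (1 + |y|) ^ 2 := by rw [← sq_abs y]; nlinarith [abs_nonneg y]
  exact le_trans (by gcongr; exact le_rfl) (hM i y)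

theorem integrable (hu : UniformRapidDecay u) {i : ι} (hc : Continuous (u i)) :
    Integrable (u i) := by
  obtain ⟨M, hM⟩ := hu.exists_norm_le_inv_one_add_sq
  exact (integrable_inv_one_add_sq.const_mul M).mono' hc.aestronglyMeasurable
    (.of_forall (hM i))

theorem continuous_integral {u : ℝ → ℝ → ℝ} (hu : UniformRapidDecay u)
    (hc : Continuous (Function.uncurry u)) : Continuous fun x => ∫ y, u x y := by
  obtain ⟨M, hM⟩ := hu.exists_norm_le_inv_one_add_sq
  exact continuous_of_dominated (fun x => (hc.uncurry_left x).aestronglyMeasurable)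
    (fun x => .of_forall (hM x)) (integrable_inv_one_add_sq.const_mul M)
    (.of_forall fun y => hc.uncurry_right y)

theorem hasDerivAt_integral {u u' : ℝ → ℝ → ℝ} (hu : UniformRapidDecay u)
    (hu' : UniformRapidDecay u') (hc : Continuous (Function.uncurry u))
    (hc' : Continuous (Function.uncurry u'))
    (hd : ∀ x y, HasDerivAt (fun x => u x y) (u' x y) x) (x : ℝ) :
    HasDerivAt (fun x => ∫ y, u x y) (∫ y, u' x y) x := by
  obtain ⟨M, hM⟩ := hu'.exists_norm_le_inv_one_add_sq
  exact (hasDerivAt_integral_of_dominated_loc_of_deriv_le Filter.univ_mem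
    (.of_forall fun x => (hc.uncurry_left x).aestronglyMeasurable)
    (hu.integrable (hc.uncurry_left x)) (hc'.uncurry_left x).aestronglyMeasurable
    (.of_forall fun y x _ => hM x y) (integrable_inv_one_add_sq.const_mul M)
    (.of_forall fun y x _ => hd x y)).2

end UniformRapidDecay

theorem hasDerivAt_integral_Iic {q : ℝ → ℝ} (hq : Continuous q) (hi : Integrable q) (y : ℝ) :
    HasDerivAt (fun y => ∫ s in Iic y, q s) (q y) y := by
  have split_at_zero : (fun y => ∫ s in Iic y, q s)
      = fun y => (∫ s in Iic (0 : ℝ), q s) + ∫ s in (0 : ℝ)..y, q s := by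
    funext z
    rw [← intervalIntegral.integral_Iic_sub_Iic hi.integrableOn hi.integrableOn]; ring
  rw [split_at_zero]
  exact (hq.integral_hasStrictDerivAt 0 y).hasDerivAt.const_add _

theorem one_add_abs_pow_mul_abs_setIntegral_le {q : ℝ → ℝ} {S : Set ℝ} {k : ℕ} {y : ℝ}
    (hi : Integrable q) (hk : Integrable fun s => (1 + |s|) ^ k * |q s|) (hS : MeasurableSet S)
    (hy : ∀ s ∈ S, |y| ≤ |s|) :
    (1 + |y|) ^ k * |∫ s in S, q s| ≤ ∫ s, (1 + |s|) ^ k * |q s| :=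
  calc (1 + |y|) ^ k * |∫ s in S, q s| ≤ (1 + |y|) ^ k * ∫ s in S, |q s| := by
        gcongr; exact abs_integral_le_integral_abs
    _ = ∫ s in S, (1 + |y|) ^ k * |q s| := (integral_const_mul _ _).symm
    _ ≤ ∫ s in S, (1 + |s|) ^ k * |q s| :=
        setIntegral_mono_on (hi.abs.integrableOn.const_mul _) hk.integrableOn hS fun s hs => by
          have := hy s hs
          gcongr
    _ ≤ ∫ s, (1 + |s|) ^ k * |q s| :=
        setIntegral_le_integral hk (.of_forall fun s => by positivity)

theorem RapidDecay.integral_Iic {q : ℝ → ℝ} (hq : RapidDecay q) (hc : Continuous q)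
    (hq0 : ∫ y, q y = 0) : RapidDecay fun y => ∫ s in Iic y, q s := by
  intro k
  have hi : Integrable q := hq.integrable (i := ()) hc
  have hk : Integrable fun s => (1 + |s|) ^ k * |q s| :=
    ((UniformPolyGrowth.one_add_abs_pow k).mul_rapidDecay hq.abs).integrable (i := ())
      (by fun_prop)
  refine ⟨∫ s, (1 + |s|) ^ k * |q s|, fun _ y => ?_⟩
  rcases le_total y 0 with hy | hy
  · refine one_add_abs_pow_mul_abs_setIntegral_le hi hk measurableSet_Iic fun s hs => ?_
    exact abs_le_abs_of_nonpos hy hs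
  · -- The mean-zero condition trades the left tail for the right one.
    have split := intervalIntegral.integral_Iic_add_Ioi (b := y) hi.integrableOn hi.integrableOn
    rw [hq0] at split
    simp only [eq_neg_of_add_eq_zero_left split, abs_neg]
    refine one_add_abs_pow_mul_abs_setIntegral_le hi hk measurableSet_Ioi fun s hs => ?_
    exact abs_le_abs_of_nonneg hy (le_of_lt hs)

theorem integral_add_mul_primitive_eq {p q w : ℝ → ℝ} (hp : Integrable p) (hq : RapidDecay q)
    (hw : PolyGrowth w) (hqc : Continuous q) (hwc : Continuous w) (hq0 : ∫ y, q y = 0) :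
    ∫ y, (p y + q y * ∫ s in (0 : ℝ)..y, w s) = ∫ y, (p y - (∫ s in Iic y, q s) * w y) := by
  have hF := hasDerivAt_integral_Iic hqc (hq.integrable (i := ()) hqc)
  have hG : ∀ y, HasDerivAt (fun y => ∫ s in (0 : ℝ)..y, w s) (w y) y := fun y =>
    (hwc.integral_hasStrictDerivAt 0 y).hasDerivAt
  have hFc : Continuous fun y => ∫ s in Iic y, q s :=
    continuous_iff_continuousAt.2 fun y => (hF y).continuousAt
  have hGc : Continuous fun y => ∫ s in (0 : ℝ)..y, w s :=
    continuous_iff_continuousAt.2 fun y => (hG y).continuousAt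
  have integrable_mul : ∀ {P R : ℝ → ℝ}, PolyGrowth P → RapidDecay R → Continuous P →
      Continuous R → Integrable fun y => R y * P y := fun hP hR hPc hRc => by
    simpa only [mul_comm] using (hP.mul_rapidDecay hR).integrable (i := ()) (hPc.mul hRc)
  have hF_decay := hq.integral_Iic hqc hq0
  have hFw := integrable_mul hw hF_decay hwc hFc
  have hqG := integrable_mul hw.primitive hq hGc hqc
  have by_parts := integral_mul_deriv_eq_deriv_mul_of_integrable (fun y _ => hF y)
    (fun y _ => hG y) hFw hqG (integrable_mul hw.primitive hF_decay hGc hFc)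
  rw [integral_add hp hqG, integral_sub hp hFw, by_parts, sub_neg_eq_add]

end Growth

section Families

/-- A family `u x` of functions of polynomial growth, jointly continuous and continuously
differentiable in the parameter `x` with derivative `u'`, all growth bounds being uniform in `x`. -/
structure IsC1PolyFamily (u u' : ℝ → ℝ → ℝ) : Prop where
  continuous : Continuous (Function.uncurry u)
  continuous_deriv : Continuous (Function.uncurry u')
  hasDerivAt : ∀ x y, HasDerivAt (fun x => u x y) (u' x y) x
  growth : UniformPolyGrowth u
  growth_deriv : UniformPolyGrowth u'

/-- A family `ρ x` of rapidly decreasing weights which is differentiable in the parameter `x` and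
whose logarithmic derivative in `x`, the score `g`, has polynomial growth uniformly in `x`. -/
structure HasScore (ρ g : ℝ → ℝ → ℝ) : Prop where
  continuous : Continuous (Function.uncurry ρ)
  continuous_score : Continuous (Function.uncurry g)
  hasDerivAt : ∀ x y, HasDerivAt (fun x => ρ x y) (g x y * ρ x y) x
  decay : UniformRapidDecay ρ
  growth_score : UniformPolyGrowth g

/-- The mean of `u` under the probability density `ρ / ∫ ρ`. -/
def weightedMean (ρ u : ℝ → ℝ) : ℝ := (∫ y, u y * ρ y) / ∫ y, ρ y

variable {u u' a a' ρ g : ℝ → ℝ → ℝ}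

namespace IsC1PolyFamily

theorem of_differentiable (hc : Continuous (Function.uncurry u))
    (hc' : Continuous fun p : ℝ × ℝ => deriv (fun x => u x p.2) p.1)
    (hd : ∀ y, Differentiable ℝ fun x => u x y) (hg : UniformPolyGrowth u)
    (hg' : UniformPolyGrowth fun x y => deriv (fun x => u x y) x) :
    IsC1PolyFamily u fun x y => deriv (fun x => u x y) x where
  continuous := hc
  continuous_deriv := hc'
  hasDerivAt x y := (hd y x).hasDerivAt
  growth := hg
  growth_deriv := hg'

theorem const (c : ℝ) : IsC1PolyFamily (fun _ _ => c) fun _ _ => 0 where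
  continuous := continuous_const
  continuous_deriv := continuous_const
  hasDerivAt x _ := hasDerivAt_const x c
  growth := .const c
  growth_deriv := .const 0

theorem div (hu : IsC1PolyFamily u u') (ha : IsC1PolyFamily a a') (ha_ne : ∀ x y, a x y ≠ 0)
    (ha_inv : UniformPolyGrowth fun x y => (a x y)⁻¹) :
    IsC1PolyFamily (fun x y => u x y / a x y)
      fun x y => (u' x y * a x y - u x y * a' x y) / a x y ^ 2 where
  continuous := hu.continuous.div ha.continuous fun p => ha_ne p.1 p.2
  continuous_deriv := ((hu.continuous_deriv.mul ha.continuous).sub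
    (hu.continuous.mul ha.continuous_deriv)).div (ha.continuous.pow 2)
      fun p => pow_ne_zero 2 (ha_ne p.1 p.2)
  hasDerivAt x y := (hu.hasDerivAt x y).div (ha.hasDerivAt x y) (ha_ne x y)
  growth := hu.growth.div ha_inv
  growth_deriv := ((hu.growth_deriv.mul ha.growth).sub (hu.growth.mul ha.growth_deriv)).div
    (by simpa only [pow_two, mul_inv] using ha_inv.mul ha_inv)

theorem primitive (hu : IsC1PolyFamily u u') :
    IsC1PolyFamily (fun x y => ∫ s in (0 : ℝ)..y, u x s) fun x y => ∫ s in (0 : ℝ)..y, u' x s where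
  continuous := intervalIntegral.continuous_parametric_primitive_of_continuous hu.continuous
  continuous_deriv :=
    intervalIntegral.continuous_parametric_primitive_of_continuous hu.continuous_deriv
  hasDerivAt x y := by
    obtain ⟨M, n, -, hM⟩ := hu.growth_deriv
    exact (intervalIntegral.hasDerivAt_integral_of_dominated_loc_of_deriv_le Filter.univ_mem
      (.of_forall fun x => (hu.continuous.uncurry_left x).aestronglyMeasurable)
      ((hu.continuous.uncurry_left x).intervalIntegrable _ _)
      (hu.continuous_deriv.uncurry_left x).aestronglyMeasurable
      (.of_forall fun s _ x _ => hM x s)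
      (Continuous.intervalIntegrable (by fun_prop) _ _)
      (.of_forall fun s _ x _ => hu.hasDerivAt x s)).2
  growth := hu.growth.primitive
  growth_deriv := hu.growth_deriv.primitive

end IsC1PolyFamily

namespace HasScore

theorem integrable_mul (hρ : HasScore ρ g) {v : ℝ → ℝ} (hv : PolyGrowth v) (hc : Continuous v)
    (x : ℝ) : Integrable fun y => v y * ρ x y :=
  (hv.mul_rapidDecay (hρ.decay.eval x)).integrable (i := ())
    (hc.mul (hρ.continuous.uncurry_left x))

theorem hasDerivAt_integral (hρ : HasScore ρ g) (hu : IsC1PolyFamily u u') (x : ℝ) :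
    HasDerivAt (fun x => ∫ y, u x y * ρ x y) (∫ y, (u' x y + u x y * g x y) * ρ x y) x :=
  (hu.growth.mul_rapidDecay hρ.decay).hasDerivAt_integral
    ((hu.growth_deriv.add (hu.growth.mul hρ.growth_score)).mul_rapidDecay hρ.decay)
    (hu.continuous.mul hρ.continuous)
    ((hu.continuous_deriv.add (hu.continuous.mul hρ.continuous_score)).mul hρ.continuous)
    (fun x y => ((hu.hasDerivAt x y).mul (hρ.hasDerivAt x y)).congr_deriv (by ring)) x

theorem contDiff_integral (hρ : HasScore ρ g) (hu : IsC1PolyFamily u u') :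
    ContDiff ℝ 1 fun x => ∫ y, u x y * ρ x y := by
  have hd := hρ.hasDerivAt_integral hu
  refine contDiff_one_iff_deriv.2 ⟨fun x => (hd x).differentiableAt, ?_⟩
  rw [funext fun x => (hd x).deriv]
  exact ((hu.growth_deriv.add (hu.growth.mul hρ.growth_score)).mul_rapidDecay
    hρ.decay).continuous_integral
      ((hu.continuous_deriv.add (hu.continuous.mul hρ.continuous_score)).mul hρ.continuous)

theorem contDiff_weightedMean (hρ : HasScore ρ g) (hu : IsC1PolyFamily u u')
    (hZ : ∀ x, ∫ y, ρ x y ≠ 0) : ContDiff ℝ 1 fun x => weightedMean (ρ x) (u x) := by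
  have hmass := hρ.contDiff_integral (.const 1)
  simp only [one_mul] at hmass
  exact (hρ.contDiff_integral hu).div hmass hZ

theorem hasDerivAt_weightedMean (hρ : HasScore ρ g) (hu : IsC1PolyFamily u u') {x : ℝ}
    (hZ : ∫ y, ρ x y ≠ 0) :
    HasDerivAt (fun x => weightedMean (ρ x) (u x))
      (weightedMean (ρ x) fun y => u' x y + (u x y - weightedMean (ρ x) (u x)) * g x y) x := by
  have hmass := hρ.hasDerivAt_integral (.const 1) x
  simp only [one_mul, zero_add] at hmass
  refine ((hρ.hasDerivAt_integral hu x).div hmass hZ).congr_deriv ?_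
  set b := weightedMean (ρ x) (u x) with hb
  have hgc := hρ.continuous_score.uncurry_left x
  have centred : ∫ y, (u' x y + (u x y - b) * g x y) * ρ x y
      = (∫ y, (u' x y + u x y * g x y) * ρ x y) - b * ∫ y, g x y * ρ x y := by
    rw [← integral_const_mul, ← integral_sub]
    · exact integral_congr_ae (.of_forall fun y => by ring)
    · exact hρ.integrable_mul ((hu.growth_deriv.add (hu.growth.mul hρ.growth_score)).eval x)
        ((hu.continuous_deriv.uncurry_left x).add ((hu.continuous.uncurry_left x).mul hgc)) x
    · exact (hρ.integrable_mul (hρ.growth_score.eval x) hgc x).const_mul b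
  rw [weightedMean, centred, hb, weightedMean]
  field_simp

end HasScore

end Families

section Density

theorem le_neg_mul_add_of_dissipative {φ : ℝ → ℝ} {c C M s : ℝ} (hc : 0 ≤ c)
    (hdis : ∀ s, φ s * s ≤ -c * s ^ 2 + C) (hM : ∀ s, |s| ≤ 1 → |φ s| ≤ M) (hs : 0 ≤ s) :
    φ s ≤ -c * s + (c + C + M) := by
  have hC : 0 ≤ C := by simpa using hdis 0
  have hM0 : 0 ≤ M := (abs_nonneg _).trans (hM 0 (by simp))
  rcases le_total s 1 with hs1 | hs1
  · have := (le_abs_self _).trans (hM s (by rwa [abs_of_nonneg hs]))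
    nlinarith
  · have : φ s * s ≤ (-c * s + C) * s := by nlinarith [hdis s]
    linarith [le_of_mul_le_mul_right this (by linarith)]

theorem primitive_le_of_dissipative {φ : ℝ → ℝ} {c C M : ℝ} (hφ : Continuous φ) (hc : 0 ≤ c)
    (hdis : ∀ s, φ s * s ≤ -c * s ^ 2 + C) (hM : ∀ s, |s| ≤ 1 → |φ s| ≤ M) (y : ℝ) :
    ∫ s in (0 : ℝ)..y, φ s ≤ -(c / 2) * y ^ 2 + (c + C + M) * |y| := by
  wlog hy : 0 ≤ y generalizing φ y
  · have := this (φ := fun s => -φ (-s)) (by fun_prop)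
      (fun s => by simpa using hdis (-s)) (fun s hs => by simpa using hM (-s) (by simpa using hs))
      (-y) (by linarith)
    simpa [intervalIntegral.integral_symm y] using this
  calc ∫ s in (0 : ℝ)..y, φ s ≤ ∫ s in (0 : ℝ)..y, (-c * s + (c + C + M)) :=
        intervalIntegral.integral_mono_on hy (hφ.intervalIntegrable _ _)
          (Continuous.intervalIntegrable (by fun_prop) _ _)
          fun s hs => le_neg_mul_add_of_dissipative hc hdis hM hs.1
    _ = -(c / 2) * y ^ 2 + (c + C + M) * |y| := by
        rw [intervalIntegral.integral_add (Continuous.intervalIntegrable (by fun_prop) _ _)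
          (by simp), intervalIntegral.integral_const_mul, integral_id,
          intervalIntegral.integral_const, abs_of_nonneg hy, smul_eq_mul]
        ring

theorem uniformRapidDecay_rho1 {ι : Type*} {a f : ι → ℝ → ℝ} {lm lp β C : ℝ}
    (hac : ∀ i, Continuous (a i)) (hfc : ∀ i, Continuous (f i)) (hlm : 0 < lm) (hβ : 0 < β)
    (hbnd : ∀ i y, lm ≤ a i y ∧ a i y ≤ lp) (hdis : ∀ i y, f i y * y ≤ -β * y ^ 2 + C)
    (hf : UniformPolyGrowth f) : UniformRapidDecay fun i => rho1 (a i) (f i) := by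
  have ha_pos : ∀ i y, 0 < a i y := fun i y => hlm.trans_le (hbnd i y).1
  have ha_inv : UniformPolyGrowth fun i y => (a i y)⁻¹ := .inv_of_le hlm fun i y => (hbnd i y).1
  obtain ⟨M, hM⟩ := (hf.div ha_inv).exists_forall_abs_le 1
  refine ha_inv.mul_rapidDecay fun k => ?_
  rcases isEmpty_or_nonempty ι with _ | ⟨⟨i₀⟩⟩
  · exact ⟨0, isEmptyElim⟩
  have hlp : 0 < lp := (ha_pos i₀ 0).trans_le (hbnd i₀ 0).2
  have hC : 0 ≤ C := by simpa using hdis i₀ 0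
  have quotient_dissipative : ∀ i s, f i s / a i s * s ≤ -(β / lp) * s ^ 2 + C / lm := fun i s =>
    calc f i s / a i s * s = f i s * s / a i s := by ring
      _ ≤ (-β * s ^ 2 + C) / a i s := by gcongr; exacts [(ha_pos i s).le, hdis i s]
      _ = -(β * s ^ 2 / a i s) + C / a i s := by ring
      _ ≤ -(β * s ^ 2 / lp) + C / lm := by
          gcongr; exacts [ha_pos i s, (hbnd i s).2, (hbnd i s).1]
      _ = -(β / lp) * s ^ 2 + C / lm := by ring
  refine uniformRapidDecay_of_abs_le_exp (c := β / lp / 2) (D := β / lp + C / lm + M)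
    (by positivity) (fun i y => ?_) k
  rw [Real.abs_exp, Real.exp_le_exp]
  exact primitive_le_of_dissipative ((hfc i).div (hac i) fun s => (ha_pos i s).ne')
    (by positivity) (quotient_dissipative i) (hM i) y

theorem rho1_pos {a : ℝ → ℝ} {y : ℝ} (f : ℝ → ℝ) (ha : 0 < a y) : 0 < rho1 a f y :=
  mul_pos (inv_pos.2 ha) (Real.exp_pos _)

theorem Z1_pos {a f : ℝ → ℝ} (ha : ∀ y, 0 < a y) (hi : Integrable (rho1 a f)) : 0 < Z1 a f := by
  refine (integral_pos_iff_support_of_nonneg (fun y => (rho1_pos f (ha y)).le) hi).2 ?_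
  have : Function.support (rho1 a f) = univ :=
    Function.support_eq_univ fun y => (rho1_pos f (ha y)).ne'
  simp [this]

theorem integral_mul_piDen (a f u : ℝ → ℝ) :
    ∫ y, u y * piDen a f y = weightedMean (rho1 a f) u := by
  simp only [piDen, ← mul_div_assoc, integral_div]
  rfl

theorem rapidDecay_piDen {a f : ℝ → ℝ} (hρ : RapidDecay (rho1 a f)) : RapidDecay (piDen a f) :=
  hρ.div_const (Z1 a f)

theorem hbar_eq_weightedMean (a f h : ℝ → ℝ) : hbar a f h = weightedMean (rho1 a f) h :=
  integral_mul_piDen a f h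

theorem integral_sub_hbar_mul_piDen {a f h : ℝ → ℝ} (hZ : Z1 a f ≠ 0)
    (hi : Integrable (rho1 a f)) (hhi : Integrable fun y => h y * rho1 a f y) :
    ∫ y, (h y - hbar a f h) * piDen a f y = 0 := by
  rw [integral_mul_piDen, weightedMean, div_eq_zero_iff]
  left
  simp only [sub_mul]
  rw [integral_sub hhi (hi.const_mul _), integral_const_mul, hbar_eq_weightedMean, weightedMean]
  exact sub_eq_zero.2 (div_mul_cancel₀ _ hZ).symm

/-- The score `∂ₓ log ρ(y; x) = ∫₀^y ∂ₓ(f / a) ds - ∂ₓa / a` of the invariant density, where `a'`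
and `f'` stand for `∂ₓa` and `∂ₓf`. -/
def rho1Score (a f a' f' : ℝ → ℝ → ℝ) (x y : ℝ) : ℝ :=
  (∫ s in (0 : ℝ)..y, (f' x s * a x s - f x s * a' x s) / a x s ^ 2) - a' x y / a x y

variable {a f h a' f' h' : ℝ → ℝ → ℝ}

theorem hasScore_rho1 (ha : IsC1PolyFamily a a') (hf : IsC1PolyFamily f f')
    (ha_pos : ∀ x y, 0 < a x y) (ha_inv : UniformPolyGrowth fun x y => (a x y)⁻¹)
    (hρ : UniformRapidDecay fun x => rho1 (a x) (f x)) :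
    HasScore (fun x => rho1 (a x) (f x)) (rho1Score a f a' f') := by
  have ha_ne : ∀ x y, a x y ≠ 0 := fun x y => (ha_pos x y).ne'
  have hA := (hf.div ha ha_ne ha_inv).primitive
  exact {
    continuous := (ha.continuous.inv₀ fun p => ha_ne p.1 p.2).mul hA.continuous.rexp
    continuous_score := hA.continuous_deriv.sub
      (ha.continuous_deriv.div ha.continuous fun p => ha_ne p.1 p.2)
    hasDerivAt := fun x y => by
      refine (((ha.hasDerivAt x y).inv (ha_ne x y)).mul (hA.hasDerivAt x y).exp).congr_deriv ?_
      have := ha_ne x y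
      simp only [rho1, rho1Score, Pi.inv_apply]
      field_simp
      ring
    decay := hρ
    growth_score := hA.growth_deriv.sub (ha.growth_deriv.div ha_inv) }

theorem transfer_integrand_eq {x y : ℝ} (dh df da : ℝ) (ha : a x y ≠ 0)
    (hπ : piDen (a x) (f x) y ≠ 0) :
    (dh - df * vyX a f h x y - da * vyyX a f h x y) * piDen (a x) (f x) y
      = (dh - (h x y - hbarX a f h x) * (da / a x y)) * piDen (a x) (f x) y
        - Fint (a x) (f x) (h x) y * ((df * a x y - f x y * da) / a x y ^ 2) := by
  simp only [vyX, vyyX]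
  field_simp
  ring

theorem integral_score_mul_piDen_eq (ha : IsC1PolyFamily a a') (hf : IsC1PolyFamily f f')
    (hh : IsC1PolyFamily h h') (ha_pos : ∀ x y, 0 < a x y)
    (ha_inv : UniformPolyGrowth fun x y => (a x y)⁻¹)
    (hρ : UniformRapidDecay fun x => rho1 (a x) (f x)) (x : ℝ) :
    ∫ y, (h' x y + (h x y - hbarX a f h x) * rho1Score a f a' f' x y) * piDen (a x) (f x) y
      = ∫ y, (h' x y - f' x y * vyX a f h x y - a' x y * vyyX a f h x y)
          * piDen (a x) (f x) y := by
  have ha_ne : ∀ x y, a x y ≠ 0 := fun x y => (ha_pos x y).ne'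
  have hscore := hasScore_rho1 ha hf ha_pos ha_inv hρ
  have hρc := hscore.continuous.uncurry_left x
  have hZ := (Z1_pos (ha_pos x) (hρ.integrable hρc)).ne'
  have hπ := rapidDecay_piDen (hρ.eval x)
  have hπc : Continuous (piDen (a x) (f x)) := hρc.div_const _
  have hw := hf.div ha ha_ne ha_inv
  have growth_centred := (hh.growth.eval x).sub (.const (hbarX a f h x))
  have centred_cont := (hh.continuous.uncurry_left x).sub (continuous_const (y := hbarX a f h x))
  have hp := ((((hh.growth_deriv.eval x).sub (growth_centred.mul
    ((ha.growth_deriv.div ha_inv).eval x))).mul_rapidDecay hπ).integrable (i := ())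
      (((hh.continuous_deriv.uncurry_left x).sub (centred_cont.mul
        ((ha.continuous_deriv.uncurry_left x).div (ha.continuous.uncurry_left x)
          (ha_ne x)))).mul hπc))
  have mean_zero := integral_sub_hbar_mul_piDen hZ (hρ.integrable hρc)
    (hscore.integrable_mul (hh.growth.eval x) (hh.continuous.uncurry_left x) x)
  calc _ = ∫ y, ((h' x y - (h x y - hbarX a f h x) * (a' x y / a x y)) * piDen (a x) (f x) y
          + (h x y - hbarX a f h x) * piDen (a x) (f x) y
            * ∫ s in (0 : ℝ)..y, (f' x s * a x s - f x s * a' x s) / a x s ^ 2) := by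
        congr! 2 with y; rw [rho1Score]; ring
    _ = ∫ y, ((h' x y - (h x y - hbarX a f h x) * (a' x y / a x y)) * piDen (a x) (f x) y
          - Fint (a x) (f x) (h x) y * ((f' x y * a x y - f x y * a' x y) / a x y ^ 2)) :=
        integral_add_mul_primitive_eq hp (growth_centred.mul_rapidDecay hπ)
          (hw.growth_deriv.eval x) (centred_cont.mul hπc) (hw.continuous_deriv.uncurry_left x)
          mean_zero
    _ = _ := by
        congr! 2 with y
        exact (transfer_integrand_eq _ _ _ (ha_ne x y)
          (div_ne_zero (rho1_pos _ (ha_pos x y)).ne' hZ)).symm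

theorem one_dim_derivative_transfer_formula_general (ha : IsC1PolyFamily a a')
    (hf : IsC1PolyFamily f f') (hh : IsC1PolyFamily h h') (ha_pos : ∀ x y, 0 < a x y)
    (ha_inv : UniformPolyGrowth fun x y => (a x y)⁻¹)
    (hρ : UniformRapidDecay fun x => rho1 (a x) (f x)) :
    ContDiff ℝ 1 (hbarX a f h) ∧
    ∀ x, HasDerivAt (hbarX a f h)
      (∫ y, (h' x y - f' x y * vyX a f h x y - a' x y * vyyX a f h x y)
        * piDen (a x) (f x) y) x := by
  have hscore := hasScore_rho1 ha hf ha_pos ha_inv hρ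
  have hZ : ∀ x, Z1 (a x) (f x) ≠ 0 := fun x =>
    (Z1_pos (ha_pos x) (hρ.integrable (hscore.continuous.uncurry_left x))).ne'
  have hmean : hbarX a f h = fun x => weightedMean (rho1 (a x) (f x)) (h x) :=
    funext fun x => hbar_eq_weightedMean (a x) (f x) (h x)
  refine ⟨hmean ▸ hscore.contDiff_weightedMean hh hZ, fun x => ?_⟩
  rw [← integral_score_mul_piDen_eq ha hf hh ha_pos ha_inv hρ, integral_mul_piDen, hmean]
  exact hscore.hasDerivAt_weightedMean hh (hZ x)

end Density

/-- the first-order derivative transfer formula for the averaged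
coefficient `h̄(x)` in dimension one. -/
theorem one_dim_derivative_transfer_formula
    (a f h : ℝ → ℝ → ℝ) (lm lp β C K : ℝ) (m : ℕ)
    (hac : Continuous fun p : ℝ × ℝ => a p.1 p.2)
    (hfc : Continuous fun p : ℝ × ℝ => f p.1 p.2)
    (hhc : Continuous fun p : ℝ × ℝ => h p.1 p.2)
    (hax : ∀ y, ContDiff ℝ 1 fun x => a x y)
    (hfx : ∀ y, ContDiff ℝ 1 fun x => f x y)
    (hhx : ∀ y, ContDiff ℝ 1 fun x => h x y)
    (haxc : Continuous fun p : ℝ × ℝ => deriv (fun x => a x p.2) p.1)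
    (hfxc : Continuous fun p : ℝ × ℝ => deriv (fun x => f x p.2) p.1)
    (hhxc : Continuous fun p : ℝ × ℝ => deriv (fun x => h x p.2) p.1)
    (hlm : 0 < lm) (hle : lm ≤ lp) (hβ : 0 < β) (hC : 0 < C) (hK : 0 < K)
    (hbnd : ∀ x y, lm ≤ a x y ∧ a x y ≤ lp)
    (hdis : ∀ x y, f x y * y ≤ -β * y ^ 2 + C)
    (hlin : ∀ x y, |f x y| ≤ K * (1 + |y|))
    (hgrow : ∀ x y, |h x y| + |deriv (fun x' => h x' y) x| +
        |deriv (fun x' => f x' y) x| + |deriv (fun x' => a x' y) x| ≤ K * (1 + |y| ^ m)) :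
    ContDiff ℝ 1 (hbarX a f h) ∧
    ∀ x, deriv (hbarX a f h) x =
      ∫ y, (deriv (fun x' => h x' y) x - deriv (fun x' => f x' y) x * vyX a f h x y -
        deriv (fun x' => a x' y) x * vyyX a f h x y) *
          piDen (fun z => a x z) (fun z => f x z) y := by
  have growth : UniformPolyGrowth h ∧ UniformPolyGrowth (fun x y => deriv (h · y) x) ∧
      UniformPolyGrowth (fun x y => deriv (f · y) x) ∧
      UniformPolyGrowth fun x y => deriv (a · y) x := by
    refine ⟨?_, ?_, ?_, ?_⟩ <;> refine .of_le_one_add_pow (m := m) hK.le fun x y => ?_ <;>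
      linarith [hgrow x y, abs_nonneg (h x y), abs_nonneg (deriv (h · y) x),
        abs_nonneg (deriv (f · y) x), abs_nonneg (deriv (a · y) x)]
  obtain ⟨growth_h, growth_dh, growth_df, growth_da⟩ := growth
  have growth_f : UniformPolyGrowth f := ⟨K, 1, hK.le, by simpa only [pow_one] using hlin⟩
  have a_pos x y : 0 < a x y := hlm.trans_le (hbnd x y).1
  have growth_a : UniformPolyGrowth a := ⟨lp, 0, (hlm.trans_le hle).le, fun x y => by
    simpa only [pow_zero, mul_one, abs_of_pos (a_pos x y)] using (hbnd x y).2⟩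
  obtain ⟨smooth, transfer⟩ := one_dim_derivative_transfer_formula_general
    (.of_differentiable hac haxc (fun y => (hax y).differentiable one_ne_zero) growth_a growth_da)
    (.of_differentiable hfc hfxc (fun y => (hfx y).differentiable one_ne_zero) growth_f growth_df)
    (.of_differentiable hhc hhxc (fun y => (hhx y).differentiable one_ne_zero) growth_h growth_dh)
    a_pos (.inv_of_le hlm fun x y => (hbnd x y).1)
    (uniformRapidDecay_rho1 (fun x => hac.uncurry_left x) (fun x => hfc.uncurry_left x) hlm hβ
      hbnd hdis growth_f)
  exact ⟨smooth, fun x => (transfer x).deriv⟩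

end
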